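/- Let R be a ring. The following are equivalent: (1) R has a left Artinian left quotient ring Q = C⁻¹R; (2) (a) R̄ is a left Goldie ring, (b) n is a nilpotent ideal, (c) C' ⊆ C, (d) for all c ∈ C' and m ∈ n there exist elements c₁ ∈ C' and m₁ ∈ n such that c₁m = m₁c, and (e) R satisfies the ascending chain condition on C'-closed left ideals. -/

import Mathlib

open Function

universe u v

/-- A regular element of a ring: a two-sided non-zero-divisor. -/
def IsRegElem {R : Type*} [Ring R] (c : R) : Prop :=
  (∀ x : R, c * x = 0 → x = 0) ∧ (∀ x : R, x * c = 0 → x = 0)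

/-- The set `C` of regular elements of a ring. -/
def regSet (R : Type*) [Ring R] : Set R := {c : R | IsRegElem c}

/-- A (left) ideal is two-sided. -/
def Ideal.IsTwoSidedNC {R : Type*} [Ring R] (I : Ideal R) : Prop :=
  ∀ a ∈ I, ∀ r : R, a * r ∈ I

/-- A prime (two-sided) ideal of a possibly noncommutative ring. -/
def Ideal.IsPrimeNC {R : Type*} [Ring R] (P : Ideal R) : Prop :=
  P ≠ ⊤ ∧ P.IsTwoSidedNC ∧ ∀ a b : R, (∀ r : R, a * r * b ∈ P) → a ∈ P ∨ b ∈ P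

/-- The prime radical `n` of a ring: the intersection of all prime ideals. -/
def primeRadical (R : Type*) [Ring R] : Ideal R := sInf {P : Ideal R | P.IsPrimeNC}

/-- `n` is a nilpotent ideal. -/
def IsNilpotentIdeal {R : Type*} [Ring R] (I : Ideal R) : Prop := ∃ k : ℕ, I ^ (k + 1) = ⊥

/-- `φ : R →+* Q` realizes `Q` as a left quotient ring `C⁻¹R` of `R`:  `R` embeds in `Q`,
every regular element of `R` becomes invertible in `Q`, and every element of `Q` has the
form `(φ c)⁻¹ * (φ r)` with `c` regular. -/
structure IsLeftQuotRing {R : Type u} {Q : Type v} [Ring R] [Ring Q] (φ : R →+* Q) : Prop where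
  inj : Function.Injective φ
  isUnit : ∀ c : R, IsRegElem c → IsUnit (φ c)
  denom : ∀ q : Q, ∃ c r : R, IsRegElem c ∧ φ c * q = φ r

/-- Data of a left quotient ring of `R`. -/
structure LeftQuotData (R : Type u) [Ring R] : Type (u + 1) where
  Q : Type u
  [instQ : Ring Q]
  φ : R →+* Q
  quot : IsLeftQuotRing φ

attribute [instance] LeftQuotData.instQ

/-- `R` has a left Artinian left quotient ring `Q = C⁻¹R`. -/
def HasArtinianLeftQuot (R : Type u) [Ring R] : Prop :=
  ∃ d : LeftQuotData R, IsArtinianRing d.Q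

/-- A subset of a ring is a left annihilator. -/
def IsLeftAnnihilatorSet {R : Type*} [Ring R] (A : Set R) : Prop :=
  ∃ S : Set R, A = {r : R | ∀ s ∈ S, r * s = 0}

/-- The ascending chain condition on left annihilators. -/
def ACCLeftAnnihilators (R : Type*) [Ring R] : Prop :=
  ∀ f : ℕ → Set R, (∀ i, IsLeftAnnihilatorSet (f i)) → (∀ i j, i ≤ j → f i ⊆ f j) →
    ∃ N, ∀ k, N ≤ k → f k = f N

/-- The module `M` contains no infinite direct sum of nonzero submodules. -/
def NoInfiniteIndepFamily (R : Type*) (M : Type*) [Ring R] [AddCommGroup M] [Module R M] : Prop :=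
  ¬ ∃ f : ℕ → Submodule R M, (∀ i, f i ≠ ⊥) ∧ iSupIndep f

/-- A left Goldie ring: ACC on left annihilators and no infinite direct sums of nonzero
left ideals. -/
def IsLeftGoldie (R : Type*) [Ring R] : Prop :=
  ACCLeftAnnihilators R ∧ NoInfiniteIndepFamily R R

/-- The subquotient `n^i/n^{i+1}` of `R` determined by the prime radical `n`. -/
abbrev grPiece (R : Type*) [Ring R] (i : ℕ) :=
  ↥(primeRadical R ^ i) ⧸
    (Submodule.comap (primeRadical R ^ i : Ideal R).subtype (primeRadical R ^ (i + 1)))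

/-- The class of `x ∈ n^i` in `n^i/n^{i+1}`. -/
def grMk {R : Type*} [Ring R] (i : ℕ) (x : R) (hx : x ∈ primeRadical R ^ i) : grPiece R i :=
  Submodule.Quotient.mk ⟨x, hx⟩

/-- The `C̄`-torsion submodule `τ_i` of `n^i/n^{i+1}` (take the span, which coincides with the
set of torsion elements whenever the latter is a submodule, e.g. when `C̄` is a left Ore set);
here `C̄` is represented through `π : R → R̄` as `{c : R | IsRegElem (π c)}`. -/
def tauSub {R : Type u} {Rbar : Type v} [Ring R] [Ring Rbar] (π : R →+* Rbar) (i : ℕ) :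
    Submodule R (grPiece R i) :=
  Submodule.span R {u : grPiece R i | ∃ c : R, IsRegElem (π c) ∧ c • u = 0}

/-- The `C̄`-torsionfree module `f_i = (n^i/n^{i+1})/τ_i`. -/
abbrev fMod {R : Type u} {Rbar : Type v} [Ring R] [Ring Rbar] (π : R →+* Rbar) (i : ℕ) :=
  grPiece R i ⧸ tauSub π i

/-- The class of `x ∈ n^i` in `f_i`. -/
def fMk {R : Type u} {Rbar : Type v} [Ring R] [Ring Rbar] (π : R →+* Rbar) (i : ℕ) (x : R)
    (hx : x ∈ primeRadical R ^ i) : fMod π i :=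
  Submodule.Quotient.mk (grMk i x hx)

/-- The subset `C⁻¹K = {(φ c)⁻¹ (φ a) : c ∈ C, a ∈ K}` of a left quotient ring. -/
def locSet {R : Type u} {Q : Type v} [Ring R] [Ring Q] (φ : R →+* Q) (K : Ideal R) : Set Q :=
  {q : Q | ∃ c a : R, IsRegElem c ∧ a ∈ K ∧ φ c * q = φ a}

/-- A subset of a ring is a left Ore set (multiplicatively closed and satisfying the left
Ore condition). -/
def IsLeftOreSubset {A : Type*} [Ring A] (S : Set A) : Prop :=
  (1 : A) ∈ S ∧ (∀ s ∈ S, ∀ t ∈ S, s * t ∈ S) ∧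
    ∀ s ∈ S, ∀ a : A, ∃ t ∈ S, ∃ b : A, t * a = b * s

/-- A left denominator set. -/
def IsLeftDenominatorSet {A : Type*} [Ring A] (S : Set A) : Prop :=
  IsLeftOreSubset S ∧ ∀ a : A, ∀ s ∈ S, a * s = 0 → ∃ t ∈ S, t * a = 0


/-- A left ideal `J` of `R` is `S`-closed: `c * r ∈ J` with `c ∈ S` implies `r ∈ J`. -/
def IsSClosedLeftIdeal {R : Type*} [Ring R] (S : Set R) (J : Ideal R) : Prop :=
  ∀ c ∈ S, ∀ r : R, c * r ∈ J → r ∈ J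

/-! Suppose `R̄` is left Goldie. By Goldie's theorem the regular elements of the semiprime ring `R̄`
form a left Ore set whose localization is semisimple; together with (c) and (d) this makes `C'` a
left Ore set of regular elements of `R`, so that `Q = C'⁻¹R` exists. The left ideals of `Q`
correspond to the `C'`-closed left ideals of `R`, so `Q` is left Noetherian by (e). The extension
`Qn` of the prime radical is a nilpotent two-sided ideal, and `Q/Qn` is the localization of `R̄`,
hence semisimple. Thus `Q` is semiprimary and left Noetherian, and so left Artinian by
Hopkins–Levitzki.

Conversely, if `Q` is left Artinian then `n` is the contraction of the Jacobson radical `J` of `Q`,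
and `R̄` is localized by the semisimple ring `Q/J`. Units lift from `Q/J` to `Q`, whence `C = C'`,
and the five conditions are read off from the two localizations. -/

open scoped nonZeroDivisors

section Submodules

variable {A M N : Type*} [Ring A] [AddCommGroup M] [Module A M] [AddCommGroup N] [Module A N]

theorem iSupIndep_of_disjoint_biSup_gt {ι : Type*} [LinearOrder ι] {f : ι → Submodule A M}
    (h : ∀ k, Disjoint (f k) (⨆ j > k, f j)) : iSupIndep f := by
  classical
  rw [iSupIndep_iff_finsetSum_eq_zero_imp_eq_zero]
  intro s v hv hsum
  by_contra! hne
  obtain ⟨i, his, hi⟩ := hne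
  set T := s.filter fun i => v i ≠ 0 with hTdef
  have hT : T.Nonempty := ⟨i, Finset.mem_filter.2 ⟨his, hi⟩⟩
  set k := T.min' hT
  have hkT : k ∈ T := T.min'_mem hT
  obtain ⟨hks, hvk⟩ := Finset.mem_filter.1 hkT
  have hsumT : v k + ∑ j ∈ T.erase k, v j = 0 := by
    rw [Finset.add_sum_erase _ _ hkT, hTdef, Finset.sum_filter_ne_zero, hsum]
  refine hvk (Submodule.disjoint_def.1 (h k) _ (hv k hks) ?_)
  rw [eq_neg_of_add_eq_zero_left hsumT]
  refine neg_mem (sum_mem fun j hj => ?_)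
  obtain ⟨hjk, hjT⟩ := Finset.mem_erase.1 hj
  have hlt : k < j := lt_of_le_of_ne (T.min'_le j hjT) hjk.symm
  exact Submodule.mem_iSup_of_mem j
    (Submodule.mem_iSup_of_mem hlt (hv j (Finset.mem_filter.1 hjT).1))

theorem iSupIndep_of_disjoint_biSup_lt {ι : Type*} [LinearOrder ι] {f : ι → Submodule A M}
    (h : ∀ k, Disjoint (f k) (⨆ j < k, f j)) : iSupIndep f :=
  iSupIndep_of_disjoint_biSup_gt (ι := ιᵒᵈ) h

theorem NoInfiniteIndepFamily.exists_forall_disjoint_sup_mem_imp_eq_bot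
    (h : NoInfiniteIndepFamily A M) {T : Set (Submodule A M)} (hT : T.Nonempty) :
    ∃ K ∈ T, ∀ D, Disjoint D K → K ⊔ D ∈ T → D = ⊥ := by
  by_contra! hne
  choose! D hdisj hmem hbot using hne
  obtain ⟨K₀, hK₀⟩ := hT
  let K : ℕ → Submodule A M := fun n => (fun L => L ⊔ D L)^[n] K₀
  have hK (n) : K (n + 1) = K n ⊔ D (K n) := iterate_succ_apply' _ _ _
  have hKT (n) : K n ∈ T := by
    induction n with
    | zero => exact hK₀
    | succ n ih => exact hK n ▸ hmem _ ih
  have hmono : Monotone K := monotone_nat_of_le_succ fun n => hK n ▸ le_sup_left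
  refine h ⟨fun n => D (K n), fun n => hbot _ (hKT n), iSupIndep_of_disjoint_biSup_lt fun n =>
    (hdisj _ (hKT n)).mono_right (iSup₂_le fun j hj => ?_)⟩
  exact (le_sup_right.trans (hK j).ge).trans (hmono hj)

/-- An essential submodule: one which meets every nonzero submodule nontrivially. -/
def IsEssentialSubmodule (E : Submodule A M) : Prop :=
  ∀ I : Submodule A M, Disjoint E I → I = ⊥

theorem IsEssentialSubmodule.mono {E F : Submodule A M} (hE : IsEssentialSubmodule E)
    (hEF : E ≤ F) : IsEssentialSubmodule F :=
  fun I hI => hE I (hI.mono_left hEF)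

theorem IsEssentialSubmodule.comap {E : Submodule A N} (hE : IsEssentialSubmodule E)
    (f : M →ₗ[A] N) : IsEssentialSubmodule (E.comap f) := by
  intro I hI
  have hmap : I.map f = ⊥ := by
    refine hE _ (Submodule.disjoint_def.2 ?_)
    rintro _ hxE ⟨x, hx, rfl⟩
    rw [Submodule.disjoint_def.1 hI x hxE hx, map_zero]
  refine hI.eq_bot_of_ge ?_
  rw [← Submodule.map_le_iff_le_comap, hmap]
  exact bot_le

theorem exists_disjoint_isEssentialSubmodule_sup (J : Submodule A M) :
    ∃ K, Disjoint J K ∧ IsEssentialSubmodule (J ⊔ K) := by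
  obtain ⟨K, hK⟩ := zorn_le₀ {K | Disjoint J K} fun c hc hchain =>
    ⟨sSup c, hchain.directedOn.disjoint_sSup_right.2 fun _ hL => hc hL, fun _ => le_sSup⟩
  refine ⟨K, hK.prop, fun I hI => hI.eq_bot_of_ge ?_⟩
  have hKI : Disjoint J (K ⊔ I) := hK.prop.disjoint_sup_right_of_disjoint_sup_left hI
  exact (le_sup_right.trans (hK.le_of_ge hKI le_sup_left)).trans le_sup_right

theorem isSemisimpleModule_of_forall_isEssentialSubmodule_eq_top
    (h : ∀ E : Submodule A M, IsEssentialSubmodule E → E = ⊤) : IsSemisimpleModule A M := by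
  refine (isSemisimpleModule_iff A M).2 ⟨fun J => ?_⟩
  obtain ⟨K, hdisj, hess⟩ := exists_disjoint_isEssentialSubmodule_sup J
  exact ⟨K, hdisj, codisjoint_iff.2 (h _ hess)⟩

end Submodules

section Goldie

open Ideal (torsionOf)

variable {A : Type*} [Ring A]

/-- A semiprime ring: `aAa = 0` implies `a = 0`, which is the elementwise form of the condition
that there are no nonzero nilpotent ideals. -/
def IsSemiprimeRing (A : Type*) [Ring A] : Prop :=
  ∀ a : A, (∀ r : A, a * r * a = 0) → a = 0

/-- The left annihilators of `d` and `d²` coincide. Powers of a given element eventually have this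
property under the ascending chain condition on left annihilators, and it is additive enough (see
`IsAnnihilatorStable.add`) to build regular elements as sums. -/
def IsAnnihilatorStable (d : A) : Prop :=
  ∀ r : A, r * (d * d) = 0 → r * d = 0

theorem ACCLeftAnnihilators.exists_maximalFor_torsionOf (h : ACCLeftAnnihilators A) {T : Set A}
    (hT : T.Nonempty) : ∃ a, MaximalFor (· ∈ T) (torsionOf A A) a := by
  have hwf : WellFounded fun b a : A => torsionOf A A a < torsionOf A A b := by
    rw [wellFounded_iff_isEmpty_descending_chain]
    refine ⟨fun ⟨f, hf⟩ => ?_⟩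
    have hmono : StrictMono fun n => torsionOf A A (f n) := strictMono_nat_of_lt_succ hf
    obtain ⟨N, hN⟩ := h (fun n => (torsionOf A A (f n) : Set A))
      (fun n => ⟨{f n}, by ext r; simp⟩) (fun i j hij => hmono.monotone hij)
    exact (hmono N.lt_succ_self).ne' (SetLike.coe_injective (hN (N + 1) N.le_succ))
  obtain ⟨a, haT, ha⟩ := hwf.has_min T hT
  exact ⟨a, haT, fun b hb hle => not_lt_iff_le_imp_ge.1 (ha b hb) hle⟩

theorem torsionOf_le_torsionOf_mul (a b : A) : torsionOf A A a ≤ torsionOf A A (a * b) :=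
  fun r (hr : r * a = 0) => show r * (a * b) = 0 by rw [← mul_assoc, hr, zero_mul]

theorem exists_pow_succ_ne_zero_of_isNilpotent {M₀ : Type*} [MonoidWithZero M₀] {z : M₀}
    (hz : IsNilpotent z) (h0 : z ≠ 0) : ∃ k, z ^ (k + 1) ≠ 0 ∧ z ^ (k + 1 + 1) = 0 := by
  obtain ⟨n, hn⟩ := hz
  exact Nat.exists_not_and_succ_of_not_zero_of_exists (p := fun k => z ^ (k + 1) = 0)
    (by rwa [zero_add, pow_one]) ⟨n, by rw [pow_succ, hn, zero_mul]⟩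

theorem IsSemiprimeRing.exists_not_isNilpotent_mul (hsp : IsSemiprimeRing A)
    (hacc : ACCLeftAnnihilators A) {a : A} (ha : a ≠ 0) : ∃ x, ¬ IsNilpotent (a * x) := by
  by_contra! hnil
  obtain ⟨b, ⟨hb0, y, rfl⟩, hmax⟩ := hacc.exists_maximalFor_torsionOf
    (T := {b | b ≠ 0 ∧ ∃ y, b = a * y}) ⟨a, ha, 1, (mul_one a).symm⟩
  refine hb0 (hsp _ fun x => ?_)
  set z := a * y * x with hz
  by_cases hz0 : z = 0
  · rw [hz0, zero_mul]
  have hznil : IsNilpotent z := by simpa only [hz, mul_assoc] using hnil (y * x)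
  obtain ⟨k, hk, hk'⟩ := exists_pow_succ_ne_zero_of_isNilpotent hznil hz0
  -- `z ^ (k + 1)` lies in `a * y * A`, so maximality makes every annihilator of it kill `a * y`.
  have hpow : z ^ (k + 1) = a * y * (x * z ^ k) := by rw [pow_succ', hz, mul_assoc]
  refine hmax (j := z ^ (k + 1)) ⟨hk, y * (x * z ^ k), by rw [hpow, mul_assoc]⟩ ?_
    (show z * z ^ (k + 1) = 0 by rw [← pow_succ', hk'])
  rw [hpow]
  exact torsionOf_le_torsionOf_mul _ _

theorem ACCLeftAnnihilators.exists_isAnnihilatorStable_pow (hacc : ACCLeftAnnihilators A) (x : A) :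
    ∃ k, IsAnnihilatorStable (x ^ (k + 1)) := by
  obtain ⟨_, ⟨k, rfl⟩, hmax⟩ :=
    hacc.exists_maximalFor_torsionOf (Set.range_nonempty fun k : ℕ => x ^ (k + 1))
  refine ⟨k, fun r hr => hmax ⟨k + 1 + k, ?_⟩ (torsionOf_le_torsionOf_mul _ _) hr⟩
  rw [← pow_add]
  rfl

namespace IsAnnihilatorStable

variable {c d : A}

theorem disjoint_torsionOf_span (hd : IsAnnihilatorStable d) :
    Disjoint (torsionOf A A d) (Ideal.span {d}) := by
  refine Submodule.disjoint_def.2 fun y hyd hy => ?_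
  obtain ⟨r, rfl⟩ := Ideal.mem_span_singleton'.1 hy
  exact hd r (by rw [← mul_assoc]; exact hyd)

theorem mul_add_eq_zero_iff (hc : IsAnnihilatorStable c) (hdc : d * c = 0) (r : A) :
    r * (c + d) = 0 ↔ r * c = 0 ∧ r * d = 0 := by
  refine ⟨fun h => ?_, fun ⟨hrc, hrd⟩ => by rw [mul_add, hrc, hrd, add_zero]⟩
  have hrcc : r * (c * c) = 0 :=
    calc r * (c * c) = r * (c + d) * c := by rw [mul_assoc, add_mul, hdc, add_zero]
      _ = 0 := by rw [h, zero_mul]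
  have hrc := hc r hrcc
  exact ⟨hrc, by rwa [mul_add, hrc, zero_add] at h⟩

theorem add (hc : IsAnnihilatorStable c) (hd : IsAnnihilatorStable d) (hdc : d * c = 0) :
    IsAnnihilatorStable (c + d) := by
  intro r hr
  rw [← mul_assoc, hc.mul_add_eq_zero_iff hdc] at hr
  have hrc : r * c = 0 := hc r (by simpa [mul_add, add_mul, mul_assoc, hdc] using hr.1)
  have hrd : r * d = 0 := hd r (by simpa [mul_add, add_mul, ← mul_assoc, hrc] using hr.2)
  rw [mul_add, hrc, hrd, add_zero]

end IsAnnihilatorStable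

theorem IsSemiprimeRing.eq_zero_of_isEssentialSubmodule_torsionOf (hsp : IsSemiprimeRing A)
    (hacc : ACCLeftAnnihilators A) {z : A} (hz : IsEssentialSubmodule (torsionOf A A z)) :
    z = 0 := by
  by_contra h0
  obtain ⟨x, hx⟩ := hsp.exists_not_isNilpotent_mul hacc h0
  obtain ⟨k, hk⟩ := hacc.exists_isAnnihilatorStable_pow (z * x)
  have hess : IsEssentialSubmodule (torsionOf A A ((z * x) ^ (k + 1))) := by
    rw [pow_succ', mul_assoc]
    exact hz.mono (torsionOf_le_torsionOf_mul _ _)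
  exact hx ⟨k + 1, Ideal.span_singleton_eq_bot.1 (hess _ hk.disjoint_torsionOf_span)⟩

theorem IsSemiprimeRing.exists_isAnnihilatorStable_mem (hsp : IsSemiprimeRing A)
    (hacc : ACCLeftAnnihilators A) {D : Ideal A} (hD : D ≠ ⊥) :
    ∃ d ∈ D, d ≠ 0 ∧ IsAnnihilatorStable d := by
  obtain ⟨a, haD, ha⟩ := Submodule.exists_mem_ne_zero_of_ne_bot hD
  obtain ⟨x, hx⟩ := hsp.exists_not_isNilpotent_mul hacc ha
  have hxa : ¬ IsNilpotent (x * a) := fun ⟨k, hk⟩ => hx ⟨k + 1, by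
    rw [pow_succ, ← mul_assoc, mul_pow_mul, hk, mul_zero, zero_mul]⟩
  obtain ⟨k, hk⟩ := hacc.exists_isAnnihilatorStable_pow (x * a)
  exact ⟨_, D.pow_mem_of_mem (D.mul_mem_left x haD) _ k.succ_pos, fun h => hxa ⟨_, h⟩, hk⟩

theorem isEssentialSubmodule_span_singleton (hdim : NoInfiniteIndepFamily A A) {c : A}
    (hc : IsRightRegular c) : IsEssentialSubmodule (Ideal.span {c}) := by
  -- If `I ∩ Ac = 0` then the sum of the left ideals `I`, `Ic`, `Ic²`, … is direct.
  intro I hI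
  by_contra hne
  let f (k : ℕ) : A →ₗ[A] A := LinearMap.toSpanSingleton A A (c ^ k)
  have hf (k) : Injective (f k) := hc.pow k
  refine hdim ⟨fun k => I.map (f k),
    fun k hk => hne (Submodule.map_injective_of_injective (hf k)
      (hk.trans (Submodule.map_bot _).symm)),
    iSupIndep_of_disjoint_biSup_gt fun k => ?_⟩
  refine (Submodule.disjoint_map (hf k) hI.symm).mono_right (iSup₂_le fun j hj => ?_)
  rintro _ ⟨x, -, rfl⟩
  obtain ⟨m, rfl⟩ := Nat.exists_eq_add_of_lt hj
  refine ⟨x * c ^ m * c, Ideal.mul_mem_left _ _ (Ideal.mem_span_singleton_self c), ?_⟩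
  simp only [f, LinearMap.toSpanSingleton_apply, smul_eq_mul, mul_assoc, ← pow_succ', ← pow_add]
  congr 2
  omega

theorem IsLeftGoldie.exists_isRightRegular_mem (hG : IsLeftGoldie A) (hsp : IsSemiprimeRing A)
    {E : Ideal A} (hE : IsEssentialSubmodule E) : ∃ c ∈ E, IsRightRegular c := by
  obtain ⟨M, ⟨c, hcE, hc, hM⟩, hmax⟩ := hG.2.exists_forall_disjoint_sup_mem_imp_eq_bot
    (T := {M | ∃ c ∈ E, IsAnnihilatorStable c ∧ Disjoint M (torsionOf A A c)})
    ⟨⊥, 0, E.zero_mem, fun r _ => mul_zero r, disjoint_bot_left⟩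
  suffices hdisj : Disjoint E (torsionOf A A c) by
    refine ⟨c, hcE, isRightRegular_iff_left_eq_zero_of_mul.2 fun r hr => ?_⟩
    exact (Submodule.eq_bot_iff _).1 (hE _ hdisj) r hr
  by_contra hne
  obtain ⟨d, ⟨hdE, hdc : d * c = 0⟩, hd0, hd⟩ :=
    hsp.exists_isAnnihilatorStable_mem hG.1 (disjoint_iff.not.1 hne)
  refine hd0 (Ideal.span_singleton_eq_bot.1 (hmax (Ideal.span {d}) ?_
    ⟨c + d, E.add_mem hcE hdE, hc.add hd hdc, Submodule.disjoint_def.2 fun y hy hycd => ?_⟩))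
  · refine hM.symm.mono_left ((Ideal.span_singleton_le_iff_mem _).2 hdc)
  · obtain ⟨m, hm, s, hs, rfl⟩ := Submodule.mem_sup.1 hy
    obtain ⟨r, rfl⟩ := Ideal.mem_span_singleton'.1 hs
    obtain ⟨hyc, hyd⟩ := (hc.mul_add_eq_zero_iff hdc _).1 hycd
    obtain rfl : m = 0 := Submodule.disjoint_def.1 hM m hm
      (by simpa [add_mul, mul_assoc, hdc] using hyc)
    rw [zero_add] at hyd ⊢
    exact hd r (by rwa [← mul_assoc])

theorem IsLeftGoldie.mem_nonZeroDivisors_of_isRightRegular (hG : IsLeftGoldie A)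
    (hsp : IsSemiprimeRing A) {c : A} (hc : IsRightRegular c) : c ∈ A⁰ := by
  refine mem_nonZeroDivisors_iff.2
    ⟨fun x hx => hsp.eq_zero_of_isEssentialSubmodule_torsionOf hG.1 ?_,
      isRightRegular_iff_left_eq_zero_of_mul.1 hc⟩
  exact (isEssentialSubmodule_span_singleton hG.2 hc).mono
    ((Ideal.span_singleton_le_iff_mem _).2 hx)

theorem IsLeftGoldie.exists_mem_nonZeroDivisors_mem (hG : IsLeftGoldie A)
    (hsp : IsSemiprimeRing A) {E : Ideal A} (hE : IsEssentialSubmodule E) : ∃ c ∈ E, c ∈ A⁰ := by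
  obtain ⟨c, hcE, hc⟩ := hG.exists_isRightRegular_mem hsp hE
  exact ⟨c, hcE, hG.mem_nonZeroDivisors_of_isRightRegular hsp hc⟩

theorem IsLeftGoldie.exists_mul_eq_mul (hG : IsLeftGoldie A) (hsp : IsSemiprimeRing A) {c : A}
    (hc : c ∈ A⁰) (a : A) : ∃ d ∈ A⁰, ∃ b, d * a = b * c := by
  have hess : IsEssentialSubmodule
      (Submodule.comap (LinearMap.toSpanSingleton A A a) (Ideal.span {c})) :=
    (isEssentialSubmodule_span_singleton hG.2
      (isRegular_iff_mem_nonZeroDivisors.2 hc).right).comap _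
  obtain ⟨d, hd, hdreg⟩ := hG.exists_mem_nonZeroDivisors_mem hsp hess
  obtain ⟨b, hb⟩ := Ideal.mem_span_singleton'.1 hd
  exact ⟨d, hdreg, b, hb.symm⟩

end Goldie

section Radicals

variable {R : Type*} [Ring R]

theorem isTwoSidedNC_iff_isTwoSided {I : Ideal R} : I.IsTwoSidedNC ↔ I.IsTwoSided :=
  ⟨fun h => ⟨fun b ha => h _ ha b⟩, fun _ _ ha b => I.mul_mem_right b ha⟩

theorem isNilpotentIdeal_iff_isNilpotent {I : Ideal R} : IsNilpotentIdeal I ↔ IsNilpotent I :=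
  ⟨fun ⟨k, hk⟩ => ⟨k + 1, hk⟩, fun ⟨k, hk⟩ => ⟨k, by
    rw [Submodule.pow_succ, hk, Submodule.zero_eq_bot, Submodule.bot_mul]⟩⟩

theorem isUnit_of_isUnit_quotientMk {I : Ideal R} [I.IsTwoSided] (hI : IsNilpotent I) {a : R}
    (ha : IsUnit (Ideal.Quotient.mk I a)) : IsUnit a := by
  have isUnit_of_mk_eq_one (x : R) (hx : Ideal.Quotient.mk I x = 1) : IsUnit x := by
    rw [← map_one (Ideal.Quotient.mk I), eq_comm, Ideal.Quotient.eq] at hx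
    obtain ⟨k, hk⟩ := hI
    have hnil : IsNilpotent (1 - x) := ⟨k, by simpa [hk] using Ideal.pow_mem_pow hx k⟩
    simpa using hnil.isUnit_one_sub
  obtain ⟨b, hab, hba⟩ := isUnit_iff_exists.1 ha
  obtain ⟨b, rfl⟩ := Ideal.Quotient.mk_surjective b
  rw [← map_mul] at hab hba
  obtain ⟨u, hu⟩ := (isUnit_of_mk_eq_one _ hab).exists_right_inv
  obtain ⟨v, hv⟩ := (isUnit_of_mk_eq_one _ hba).exists_left_inv
  rw [mul_assoc] at hu
  rw [← mul_assoc] at hv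
  exact isUnit_iff_exists_and_exists.2 ⟨⟨_, hu⟩, ⟨_, hv⟩⟩

theorem isPrimeNC_annihilator (M : Type*) [AddCommGroup M] [Module R M] [IsSimpleModule R M] :
    (Module.annihilator R M).IsPrimeNC := by
  refine ⟨fun h => ?_, isTwoSidedNC_iff_isTwoSided.2 inferInstance, fun a b hab => ?_⟩
  · have := IsSimpleModule.nontrivial R M
    obtain ⟨x, hx⟩ := exists_ne (0 : M)
    exact hx (by simpa using Module.mem_annihilator.1 ((Ideal.eq_top_iff_one _).1 h) x)
  · by_contra! hne
    simp only [Module.mem_annihilator, not_forall] at hab hne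
    obtain ⟨⟨y, hy⟩, x, hx⟩ := hne
    obtain ⟨r, rfl⟩ := IsSimpleModule.toSpanSingleton_surjective R hx y
    exact hy (by simpa [mul_smul] using hab r x)

theorem primeRadical_le_jacobson (R : Type*) [Ring R] : primeRadical R ≤ Ring.jacobson R := by
  rw [Ring.jacobson_eq_sInf_isMaximal]
  refine le_sInf fun m (hm : m.IsMaximal) a ha => ?_
  have : IsSimpleModule R (R ⧸ m) := isSimpleModule_iff_isCoatom.2 hm.1
  have hann : a ∈ Module.annihilator R (R ⧸ m) :=
    Submodule.mem_sInf.1 ha _ (isPrimeNC_annihilator _)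
  rw [← Submodule.Quotient.mk_eq_zero, ← mul_one a]
  exact Module.mem_annihilator.1 hann (Submodule.Quotient.mk 1)

theorem le_of_isPrimeNC_of_pow_le {P I : Ideal R} [I.IsTwoSided] (hP : P.IsPrimeNC) :
    ∀ k : ℕ, I ^ k ≤ P → I ≤ P
  | 0, h => (hP.1 (top_le_iff.1 (by rwa [Submodule.pow_zero, Ideal.one_eq_top] at h))).elim
  | k + 1, h => by
    by_contra hle
    obtain ⟨a, haI, haP⟩ := SetLike.not_le_iff_exists.1 hle
    refine hle (le_of_isPrimeNC_of_pow_le hP k fun b hb =>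
      (hP.2.2 a b fun r => h ?_).resolve_left haP)
    rw [Ideal.IsTwoSided.pow_succ]
    exact Ideal.mul_mem_mul (I.mul_mem_right r haI) hb

theorem le_primeRadical_of_isNilpotent {I : Ideal R} [I.IsTwoSided] (hI : IsNilpotent I) :
    I ≤ primeRadical R := by
  obtain ⟨k, hk⟩ := hI
  exact le_sInf fun P hP => le_of_isPrimeNC_of_pow_le hP k (hk ▸ bot_le)

theorem isSemiprimaryRing_of_isSemisimpleRing_quotient {I : Ideal R} [I.IsTwoSided]
    [IsSemisimpleRing (R ⧸ I)] (hI : IsNilpotent I) : IsSemiprimaryRing R := by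
  obtain rfl : I = Ring.jacobson R := le_antisymm
    ((le_primeRadical_of_isNilpotent hI).trans (primeRadical_le_jacobson R))
    (Ring.jacobson_le_of_eq_bot (IsSemisimpleRing.jacobson_eq_bot _))
  exact ⟨inferInstance, hI⟩

theorem comap_pow_le_comap_pow {Q : Type*} [Ring Q] (φ : R →+* Q) (J : Ideal Q) (k : ℕ) :
    J.comap φ ^ k ≤ (J ^ k).comap φ := by
  induction k with
  | zero => simp only [Submodule.pow_zero, Ideal.one_eq_top, Ideal.comap_top, le_refl]
  | succ k ih =>
    rw [Submodule.pow_succ, Submodule.pow_succ]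
    refine Ideal.mul_le.2 fun x hx y hy => ?_
    rw [Ideal.mem_comap, map_mul]
    exact Ideal.mul_mem_mul (ih hx) hy

theorem isNilpotent_comap {Q : Type*} [Ring Q] {φ : R →+* Q} (hφ : Injective φ) {J : Ideal Q}
    (hJ : IsNilpotent J) : IsNilpotent (J.comap φ) := by
  obtain ⟨k, hk⟩ := hJ
  refine ⟨k, le_bot_iff.1 ((comap_pow_le_comap_pow φ J k).trans ?_)⟩
  rw [hk, Submodule.zero_eq_bot, ← RingHom.ker_eq_comap_bot,
    (RingHom.injective_iff_ker_eq_bot φ).1 hφ]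

theorem isSemiprimeRing_of_ker_eq_primeRadical {R' : Type*} [Ring R'] {π : R →+* R'}
    (hπ : Surjective π) (hker : RingHom.ker π = primeRadical R) : IsSemiprimeRing R' := by
  intro a ha
  obtain ⟨a, rfl⟩ := hπ a
  have haRa (r : R) : a * r * a ∈ primeRadical R := by
    rw [← hker, RingHom.mem_ker, map_mul, map_mul, ha]
  rw [← RingHom.mem_ker, hker]
  exact Submodule.mem_sInf.2 fun P hP =>
    or_self_iff.1 (hP.2.2 a a fun r => Submodule.mem_sInf.1 (haRa r) P hP)

end Radicals

section LeftLocalization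

variable {R Q : Type*} [Ring R] [Ring Q]

/-- `φ : R →+* Q` realizes `Q` as the left localization of `R` at a submonoid `S` of regular
elements. For `S = R⁰` this is `IsLeftQuotRing φ`. -/
structure IsLeftLocalization (S : Submonoid R) (φ : R →+* Q) : Prop where
  inj : Injective φ
  isUnit : ∀ c ∈ S, IsUnit (φ c)
  denom : ∀ q : Q, ∃ c ∈ S, ∃ r : R, φ c * q = φ r

theorem orderIso_apply_eq_of_le_apply {α : Type*} [PartialOrder α] [WellFoundedGT α] (σ : α ≃o α)
    {x : α} (hx : x ≤ σ x) : σ x = x := by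
  obtain ⟨n, hn⟩ := WellFoundedGT.monotone_chain_condition
    ⟨fun n => σ^[n] x, σ.monotone.monotone_iterate_of_le_map hx⟩
  refine (σ.injective.iterate n) ?_
  rw [← iterate_succ_apply]
  exact (hn (n + 1) n.le_succ).symm

namespace IsLeftLocalization

variable {S : Submonoid R} {φ : R →+* Q}

theorem numeratorRingHom [OreLocalization.OreSet S] (hS : S ≤ R⁰) :
    IsLeftLocalization S (OreLocalization.numeratorRingHom (R := R) (S := S)) where
  inj := OreLocalization.numeratorHom_inj fun _ hc => (mem_nonZeroDivisors_iff.1 (hS hc)).1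
  isUnit c hc := OreLocalization.numerator_isUnit (⟨c, hc⟩ : S)
  denom q := by
    induction q using OreLocalization.ind with
    | _ r s => exact ⟨s, s.2, r, OreLocalization.mul_cancel⟩

theorem mem_of_mul_mem (h : IsLeftLocalization S φ) {J : Ideal Q} {c : R} (hc : c ∈ S) {q : Q}
    (hq : φ c * q ∈ J) : q ∈ J :=
  (J.unit_mul_mem_iff_mem (h.isUnit c hc)).1 hq

theorem exists_denom_mul (h : IsLeftLocalization S φ) (q : Q) {c : R} (hc : c ∈ S) :
    ∃ d ∈ S, ∃ b : R, φ d * q = φ b * φ c := by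
  obtain ⟨u, hu⟩ := h.isUnit c hc
  obtain ⟨d, hd, b, hb⟩ := h.denom (q * ↑u⁻¹)
  exact ⟨d, hd, b, by rw [← hb, ← hu, mul_assoc, Units.inv_mul_cancel_right]⟩

theorem mem_map_iff (h : IsLeftLocalization S φ) {I : Ideal R} {q : Q} :
    q ∈ I.map φ ↔ ∃ c ∈ S, ∃ x ∈ I, φ c * q = φ x := by
  refine ⟨fun hq => ?_, fun ⟨c, hc, x, hx, hq⟩ =>
    h.mem_of_mul_mem hc (hq ▸ Ideal.mem_map_of_mem φ hx)⟩
  refine Submodule.span_induction (p := fun q _ => ∃ c ∈ S, ∃ x ∈ I, φ c * q = φ x)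
    ?_ ?_ ?_ ?_ hq
  · rintro _ ⟨x, hx, rfl⟩
    exact ⟨1, S.one_mem, x, hx, by rw [map_one, one_mul]⟩
  · exact ⟨1, S.one_mem, 0, I.zero_mem, by rw [mul_zero, map_zero]⟩
  · rintro q₁ q₂ - - ⟨c₁, hc₁, x₁, hx₁, h₁⟩ ⟨c₂, hc₂, x₂, hx₂, h₂⟩
    obtain ⟨d, hd, b, hb⟩ := h.exists_denom_mul (φ c₁) hc₂
    refine ⟨d * c₁, S.mul_mem hd hc₁, d * x₁ + b * x₂,
      I.add_mem (I.mul_mem_left d hx₁) (I.mul_mem_left b hx₂), ?_⟩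
    rw [mul_add, map_mul, map_add, map_mul, map_mul, mul_assoc, h₁, hb, mul_assoc, h₂]
  · rintro q' q - ⟨c, hc, x, hx, hx'⟩
    obtain ⟨d, hd, b, hb⟩ := h.exists_denom_mul q' hc
    refine ⟨d, hd, b * x, I.mul_mem_left b hx, ?_⟩
    rw [smul_eq_mul, ← mul_assoc, hb, mul_assoc, hx', map_mul]

theorem isSClosed_comap (h : IsLeftLocalization S φ) (J : Ideal Q) :
    IsSClosedLeftIdeal (S : Set R) (J.comap φ) :=
  fun c hc r hr => h.mem_of_mul_mem hc (by rwa [Ideal.mem_comap, map_mul] at hr)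

theorem comap_map_of_isSClosed (h : IsLeftLocalization S φ) {I : Ideal R}
    (hI : IsSClosedLeftIdeal (S : Set R) I) : (I.map φ).comap φ = I := by
  refine le_antisymm (fun r hr => ?_) Ideal.le_comap_map
  obtain ⟨c, hc, x, hx, hcx⟩ := h.mem_map_iff.1 hr
  rw [← map_mul] at hcx
  exact hI c hc r (h.inj hcx ▸ hx)

theorem map_comap (h : IsLeftLocalization S φ) (J : Ideal Q) : (J.comap φ).map φ = J := by
  refine le_antisymm Ideal.map_comap_le fun q hq => ?_
  obtain ⟨c, hc, r, hr⟩ := h.denom q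
  exact h.mem_map_iff.2 ⟨c, hc, r, Ideal.mem_comap.2 (hr ▸ J.mul_mem_left _ hq), hr⟩

theorem isNoetherianRing (h : IsLeftLocalization S φ)
    (hacc : ∀ f : ℕ → Ideal R, (∀ i, IsSClosedLeftIdeal (S : Set R) (f i)) →
      (∀ i j, i ≤ j → f i ≤ f j) → ∃ N, ∀ k, N ≤ k → f k = f N) : IsNoetherianRing Q := by
  rw [isNoetherianRing_iff, ← monotone_stabilizes_iff_noetherian]
  intro f
  obtain ⟨N, hN⟩ := hacc (fun i => Ideal.comap φ (f i)) (fun i => h.isSClosed_comap _)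
    fun i j hij => Ideal.comap_mono (f.monotone hij)
  refine ⟨N, fun m hm => ?_⟩
  rw [← h.map_comap (f N), ← h.map_comap (f m), hN m hm]

theorem acc_isSClosed (h : IsLeftLocalization S φ) [IsNoetherianRing Q] (f : ℕ → Ideal R)
    (hf : ∀ i, IsSClosedLeftIdeal (S : Set R) (f i)) (hmono : ∀ i j, i ≤ j → f i ≤ f j) :
    ∃ N, ∀ k, N ≤ k → f k = f N := by
  obtain ⟨N, hN⟩ := WellFoundedGT.monotone_chain_condition
    (⟨fun i => (f i).map φ, fun i j hij => Ideal.map_mono (hmono i j hij)⟩ : ℕ →o Ideal Q)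
  refine ⟨N, fun k hk => ?_⟩
  rw [← h.comap_map_of_isSClosed (hf k), ← h.comap_map_of_isSClosed (hf N)]
  exact congrArg _ (hN k hk).symm

theorem disjoint_map (h : IsLeftLocalization S φ) {I J : Ideal R} (hIJ : Disjoint I J) :
    Disjoint (I.map φ) (J.map φ) := by
  refine Submodule.disjoint_def.2 fun q hqI hqJ => ?_
  obtain ⟨c, hc, x, hx, hcx⟩ := h.mem_map_iff.1 hqI
  have hxJ : φ x ∈ J.map φ := hcx ▸ Ideal.mul_mem_left _ _ hqJ
  obtain ⟨d, hd, y, hy, hdy⟩ := h.mem_map_iff.1 hxJ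
  rw [← map_mul] at hdy
  have hdx : d * x = 0 :=
    Submodule.disjoint_def.1 hIJ _ (I.mul_mem_left d hx) (h.inj hdy ▸ hy)
  rw [← (h.isUnit c hc).mul_right_eq_zero, hcx, ← (h.isUnit d hd).mul_right_eq_zero, ← map_mul,
    hdx, map_zero]

theorem isEssentialSubmodule_comap (h : IsLeftLocalization S φ) {E : Ideal Q}
    (hE : IsEssentialSubmodule E) : IsEssentialSubmodule (E.comap φ) := by
  intro I hI
  refine (Ideal.map_eq_bot_iff_of_injective h.inj).1 (hE _ ?_)
  have hdisj := h.disjoint_map hI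
  rwa [h.map_comap] at hdisj

theorem isSemisimpleRing (h : IsLeftLocalization R⁰ φ) (hG : IsLeftGoldie R)
    (hsp : IsSemiprimeRing R) : IsSemisimpleRing Q := by
  refine isSemisimpleModule_of_forall_isEssentialSubmodule_eq_top fun E hE => ?_
  obtain ⟨c, hcE, hc⟩ := hG.exists_mem_nonZeroDivisors_mem hsp (h.isEssentialSubmodule_comap hE)
  exact Ideal.eq_top_of_isUnit_mem E hcE (h.isUnit c hc)

theorem accLeftAnnihilators (h : IsLeftLocalization S φ) [IsNoetherianRing Q] :
    ACCLeftAnnihilators R := by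
  intro f hf hmono
  choose T hT using hf
  let g (i : ℕ) : Ideal R := ⨅ s ∈ T i, Ideal.torsionOf R R s
  have hg (i) : (g i : Set R) = f i := by
    ext r
    simp [g, hT]
  have hclosed (i) : IsSClosedLeftIdeal (S : Set R) (g i) := by
    intro c hc r hr
    simp only [g, Submodule.mem_iInf, Ideal.mem_torsionOf_iff, smul_eq_mul] at hr ⊢
    intro s hs
    refine h.inj ((h.isUnit c hc).mul_right_injective ?_)
    simp only [← map_mul, ← mul_assoc, hr s hs, mul_zero, map_zero]
  obtain ⟨N, hN⟩ := h.acc_isSClosed g hclosed fun i j hij =>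
    SetLike.coe_subset_coe.1 (by simpa only [hg] using hmono i j hij)
  exact ⟨N, fun k hk => by rw [← hg, ← hg, hN k hk]⟩

theorem noInfiniteIndepFamily (h : IsLeftLocalization S φ) [IsNoetherianRing Q] :
    NoInfiniteIndepFamily R R := by
  rintro ⟨f, hf, hind⟩
  have hind' : iSupIndep fun k => Ideal.map φ (f k) := fun k => by
    have hdisj := h.disjoint_map (hind k)
    simpa only [Ideal.map_iSup] using hdisj
  have hne (k) : Ideal.map φ (f k) ≠ ⊥ := (Ideal.map_eq_bot_iff_of_injective h.inj).not.2 (hf k)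
  exact Set.infinite_univ (by simpa [hne] using WellFoundedGT.finite_ne_bot_of_iSupIndep hind')

theorem isLeftGoldie (h : IsLeftLocalization S φ) [IsNoetherianRing Q] : IsLeftGoldie R :=
  ⟨h.accLeftAnnihilators, h.noInfiniteIndepFamily⟩

theorem isUnit_map_iff (h : IsLeftLocalization S φ) [IsArtinianRing Q] {c : R} :
    IsUnit (φ c) ↔ c ∈ R⁰ := by
  refine ⟨fun hc => mem_nonZeroDivisors_of_injective h.inj hc.mem_nonZeroDivisors, fun hc => ?_⟩
  refine IsArtinianRing.isUnit_iff_isRightRegular.2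
    (isRightRegular_iff_left_eq_zero_of_mul.2 fun q hq => ?_)
  obtain ⟨d, hd, r, hr⟩ := h.denom q
  have hrc : r * c = 0 := h.inj (by rw [map_mul, ← hr, mul_assoc, hq, mul_zero, map_zero])
  rw [(mem_nonZeroDivisors_iff.1 hc).2 r hrc, map_zero] at hr
  exact (h.isUnit d hd).mul_right_eq_zero.1 hr

section TwoSided

variable {I : Ideal R} [I.IsTwoSided]

theorem mul_map_mem_map (h : IsLeftLocalization S φ) {q : Q} (hq : q ∈ I.map φ) (r : R) :
    q * φ r ∈ I.map φ := by
  obtain ⟨c, hc, x, hx, hcx⟩ := h.mem_map_iff.1 hq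
  exact h.mem_map_iff.2 ⟨c, hc, x * r, I.mul_mem_right r hx, by rw [← mul_assoc, hcx, map_mul]⟩

variable [IsNoetherianRing Q]

theorem mul_map_mem_map_iff (h : IsLeftLocalization S φ) {c : R} (hc : c ∈ S) {q : Q} :
    q * φ c ∈ I.map φ ↔ q ∈ I.map φ := by
  -- Right multiplication by `φ c` permutes the left ideals of `Q` and maps `I.map φ` into itself,
  -- hence onto itself by the ascending chain condition.
  let e : Q ≃ₗ[Q] Q := LinearEquiv.ofBijective (LinearMap.toSpanSingleton Q Q (φ c))
    (IsUnit.isUnit_iff_mulRight_bijective.1 (h.isUnit c hc))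
  have hfix : Submodule.comap e.toLinearMap (I.map φ) = I.map φ :=
    orderIso_apply_eq_of_le_apply (Submodule.orderIsoMapComap e).symm
      fun x hx => h.mul_map_mem_map hx c
  exact Submodule.ext_iff.1 hfix q

theorem isTwoSided_map (h : IsLeftLocalization S φ) : (I.map φ).IsTwoSided := by
  refine ⟨fun {x} q hx => ?_⟩
  obtain ⟨c, hc, r, hr⟩ := h.denom q
  obtain ⟨u, hu⟩ := h.isUnit c hc
  have hxu : x * ↑u⁻¹ ∈ I.map φ := by
    rwa [← h.mul_map_mem_map_iff hc, ← hu, Units.inv_mul_cancel_right]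
  have hq : q = ↑u⁻¹ * φ r := by rw [← hr, ← hu, Units.inv_mul_cancel_left]
  rw [hq, ← mul_assoc]
  exact h.mul_map_mem_map hxu r

theorem map_mul_le (h : IsLeftLocalization S φ) (J : Ideal R) :
    I.map φ * J.map φ ≤ (I * J).map φ := by
  have := h.isTwoSided_map (I := I)
  refine Ideal.mul_le.2 fun x hx y hy => ?_
  obtain ⟨c, hc, b, hb, hcb⟩ := h.mem_map_iff.1 hy
  obtain ⟨u, hu⟩ := h.isUnit c hc
  obtain ⟨d, hd, a, ha, hda⟩ := h.mem_map_iff.1 ((I.map φ).mul_mem_right ↑u⁻¹ hx)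
  refine h.mem_map_iff.2 ⟨d, hd, a * b, Ideal.mul_mem_mul ha hb, ?_⟩
  rw [map_mul, ← hda, ← hcb, ← hu, mul_assoc, mul_assoc, Units.inv_mul_cancel_left]

theorem map_pow_le (h : IsLeftLocalization S φ) (k : ℕ) : I.map φ ^ k ≤ (I ^ k).map φ := by
  have := h.isTwoSided_map (I := I)
  induction k with
  | zero => simp only [Submodule.pow_zero, Ideal.one_eq_top, Ideal.map_top, le_refl]
  | succ k ih =>
    rw [Ideal.IsTwoSided.pow_succ, Ideal.IsTwoSided.pow_succ]
    exact (Ideal.mul_mono_right ih).trans (h.map_mul_le _)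

theorem isNilpotent_map (h : IsLeftLocalization S φ) (hI : IsNilpotent I) :
    IsNilpotent (I.map φ) := by
  obtain ⟨k, hk⟩ := hI
  refine ⟨k, le_bot_iff.1 ((h.map_pow_le k).trans ?_)⟩
  rw [hk, Submodule.zero_eq_bot, Ideal.map_bot]

end TwoSided

theorem isPrimeNC_comap (h : IsLeftLocalization S φ) [IsNoetherianRing Q] {P : Ideal Q}
    (hP : P.IsPrimeNC) : (P.comap φ).IsPrimeNC := by
  have := isTwoSidedNC_iff_isTwoSided.1 hP.2.1
  refine ⟨Ideal.comap_ne_top φ hP.1, isTwoSidedNC_iff_isTwoSided.2 inferInstance,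
    fun a b hab => ?_⟩
  -- `I` is two-sided, so its extension absorbs right multiplication by all of `Q`.
  let I : Ideal R := (P.comap φ).colon (Ideal.span {b} : Ideal R)
  have haI : a ∈ I := Submodule.mem_colon.2 fun x hx => by
    obtain ⟨r, rfl⟩ := Ideal.mem_span_singleton'.1 hx
    rw [smul_eq_mul, ← mul_assoc]
    exact hab r
  have := h.isTwoSided_map (I := I)
  refine hP.2.2 (φ a) (φ b) fun q => ?_
  obtain ⟨c, hc, x, hx, hcx⟩ :=
    h.mem_map_iff.1 ((I.map φ).mul_mem_right q (Ideal.mem_map_of_mem φ haI))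
  refine h.mem_of_mul_mem hc ?_
  rw [← mul_assoc, hcx, ← map_mul]
  exact Submodule.mem_colon.1 hx b (Ideal.mem_span_singleton_self b)

theorem primeRadical_eq_comap_jacobson (h : IsLeftLocalization S φ) [IsArtinianRing Q] :
    primeRadical R = (Ring.jacobson Q).comap φ := by
  refine le_antisymm (le_trans (fun x hx => ?_) (Ideal.comap_mono (primeRadical_le_jacobson Q)))
    (le_primeRadical_of_isNilpotent (isNilpotent_comap h.inj IsSemiprimaryRing.isNilpotent))
  exact Submodule.mem_sInf.2 fun P hP => Submodule.mem_sInf.1 hx _ (h.isPrimeNC_comap hP)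

theorem exists_quotient (h : IsLeftLocalization S φ) {R' : Type*} [Ring R'] {π : R →+* R'}
    (hπ : Surjective π) {N : Ideal Q} [N.IsTwoSided] (hN : RingHom.ker π = N.comap φ) :
    ∃ ψ : R' →+* Q ⧸ N, (∀ r, ψ (π r) = Ideal.Quotient.mk N (φ r)) ∧
      IsLeftLocalization (S.map π) ψ := by
  have hker : RingHom.ker π ≤ RingHom.ker ((Ideal.Quotient.mk N).comp φ) := by
    rw [hN, ← RingHom.comap_ker, Ideal.mk_ker]
  let ψ : R' →+* Q ⧸ N := π.liftOfSurjective hπ ⟨_, hker⟩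
  have hψ (r : R) : ψ (π r) = Ideal.Quotient.mk N (φ r) :=
    RingHom.liftOfRightInverse_comp_apply _ _ _ ⟨_, hker⟩ r
  refine ⟨ψ, hψ, (injective_iff_map_eq_zero ψ).2 fun x hx => ?_, ?_, fun q => ?_⟩
  · obtain ⟨r, rfl⟩ := hπ x
    rwa [hψ, Ideal.Quotient.eq_zero_iff_mem, ← Ideal.mem_comap, ← hN] at hx
  · rintro _ ⟨c, hc, rfl⟩
    exact hψ c ▸ (h.isUnit c hc).map _
  · obtain ⟨q, rfl⟩ := Ideal.Quotient.mk_surjective q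
    obtain ⟨c, hc, r, hr⟩ := h.denom q
    exact ⟨π c, ⟨c, hc, rfl⟩, π r, by rw [hψ, hψ, ← map_mul, hr]⟩

end IsLeftLocalization

end LeftLocalization

section Criterion

variable {R R' Q : Type*} [Ring R] [Ring R'] [Ring Q] {S : Submonoid R} {φ : R →+* Q}
  {π : R →+* R'}

theorem isRegElem_iff_mem_nonZeroDivisors {c : R} : IsRegElem c ↔ c ∈ R⁰ :=
  mem_nonZeroDivisors_iff.symm

theorem nonempty_oreSet_comap {T : Submonoid R'} (hπ : Surjective π) (hreg : T.comap π ≤ R⁰)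
    (hT : ∀ c ∈ T, ∀ a, ∃ d ∈ T, ∃ b, d * a = b * c)
    (hker : ∀ c ∈ T.comap π, ∀ m ∈ RingHom.ker π, ∃ d ∈ T.comap π, ∃ b, d * m = b * c) :
    Nonempty (OreLocalization.OreSet (T.comap π)) := by
  refine OreLocalization.nonempty_oreSet_iff.2
    ⟨fun r₁ r₂ s hs => ⟨1, ?_⟩, fun a ⟨c, hc⟩ => ?_⟩
  · rw [(isRegular_iff_mem_nonZeroDivisors.2 (hreg s.2)).right hs]
  · obtain ⟨d, hd, b, hdb⟩ := hT _ hc (π a)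
    obtain ⟨d, rfl⟩ := hπ d
    obtain ⟨b, rfl⟩ := hπ b
    have hm : d * a - b * c ∈ RingHom.ker π := by
      rw [RingHom.mem_ker, map_sub, map_mul, map_mul, hdb, sub_self]
    obtain ⟨d', hd', b', h⟩ := hker c hc _ hm
    refine ⟨d' * b + b', ⟨d' * d, (T.comap π).mul_mem hd' hd⟩, ?_⟩
    change d' * d * a = (d' * b + b') * c
    rw [add_mul, ← h, mul_sub, mul_assoc, mul_assoc, add_sub_cancel]

theorem isSClosedLeftIdeal_ker (π : R →+* R') :
    IsSClosedLeftIdeal ((R'⁰.comap π : Submonoid R) : Set R) (RingHom.ker π) := by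
  intro c hc r hr
  rw [RingHom.mem_ker, map_mul] at hr
  exact (mem_nonZeroDivisors_iff.1 hc).1 _ hr

theorem IsLeftQuotRing.isLeftLocalization (h : IsLeftQuotRing φ) : IsLeftLocalization R⁰ φ where
  inj := h.inj
  isUnit c hc := h.isUnit c (isRegElem_iff_mem_nonZeroDivisors.2 hc)
  denom q := by
    obtain ⟨c, r, hc, hr⟩ := h.denom q
    exact ⟨c, isRegElem_iff_mem_nonZeroDivisors.1 hc, r, hr⟩

namespace IsLeftLocalization

theorem isLeftQuotRing (h : IsLeftLocalization S φ) [IsArtinianRing Q] : IsLeftQuotRing φ where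
  inj := h.inj
  isUnit c hc := h.isUnit_map_iff.2 (isRegElem_iff_mem_nonZeroDivisors.1 hc)
  denom q := by
    obtain ⟨c, hc, r, hr⟩ := h.denom q
    exact ⟨c, r, isRegElem_iff_mem_nonZeroDivisors.2 (h.isUnit_map_iff.1 (h.isUnit c hc)), hr⟩

theorem isArtinianRing (h : IsLeftLocalization (R'⁰.comap π) φ) [IsNoetherianRing Q]
    (hπ : Surjective π) (hG : IsLeftGoldie R') (hsp : IsSemiprimeRing R')
    (hnil : IsNilpotent (RingHom.ker π)) : IsArtinianRing Q := by
  have := h.isTwoSided_map (I := RingHom.ker π)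
  obtain ⟨ψ, -, hψ⟩ := h.exists_quotient hπ
    (h.comap_map_of_isSClosed (isSClosedLeftIdeal_ker π)).symm
  rw [Submonoid.map_comap_eq_of_surjective hπ] at hψ
  have := hψ.isSemisimpleRing hG hsp
  have := isSemiprimaryRing_of_isSemisimpleRing_quotient (h.isNilpotent_map hnil)
  exact IsSemiprimaryRing.isNoetherian_iff_isArtinian.1 inferInstance

section PrimeRadical

variable [IsArtinianRing Q]

theorem isNilpotent_primeRadical (h : IsLeftLocalization S φ) : IsNilpotent (primeRadical R) :=
  h.primeRadical_eq_comap_jacobson ▸ isNilpotent_comap h.inj IsSemiprimaryRing.isNilpotent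

theorem isLeftGoldie_of_ker_eq_primeRadical (h : IsLeftLocalization S φ) (hπ : Surjective π)
    (hker : RingHom.ker π = primeRadical R) : IsLeftGoldie R' := by
  obtain ⟨ψ, -, hψ⟩ := h.exists_quotient hπ (hker.trans h.primeRadical_eq_comap_jacobson)
  exact hψ.isLeftGoldie

theorem map_mem_nonZeroDivisors_iff (h : IsLeftLocalization S φ) (hπ : Surjective π)
    (hker : RingHom.ker π = primeRadical R) {c : R} : π c ∈ R'⁰ ↔ c ∈ R⁰ := by
  obtain ⟨ψ, hψπ, hψ⟩ := h.exists_quotient hπ (hker.trans h.primeRadical_eq_comap_jacobson)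
  calc π c ∈ R'⁰ ↔ IsUnit (Ideal.Quotient.mk (Ring.jacobson Q) (φ c)) := by
        rw [← hψ.isUnit_map_iff, hψπ]
    _ ↔ IsUnit (φ c) :=
        ⟨isUnit_of_isUnit_quotientMk IsSemiprimaryRing.isNilpotent, fun hu => hu.map _⟩
    _ ↔ c ∈ R⁰ := h.isUnit_map_iff

theorem exists_mul_eq_mul_of_mem_primeRadical (h : IsLeftLocalization S φ) {c m : R}
    (hc : c ∈ S) (hm : m ∈ primeRadical R) : ∃ d ∈ S, ∃ b ∈ primeRadical R, d * m = b * c := by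
  obtain ⟨d, hd, b, hb⟩ := h.exists_denom_mul (φ m) hc
  refine ⟨d, hd, b, ?_, h.inj (by rw [map_mul, map_mul, hb])⟩
  rw [h.primeRadical_eq_comap_jacobson, Ideal.mem_comap] at hm ⊢
  obtain ⟨u, hu⟩ := h.isUnit c hc
  have hφb : φ b = φ d * φ m * ↑u⁻¹ := by rw [hb, ← hu, Units.mul_inv_cancel_right]
  rw [hφb]
  exact Ideal.mul_mem_right _ _ (Ideal.mul_mem_left _ _ hm)

end PrimeRadical

end IsLeftLocalization

end Criterion

/-- **Theorem (`4Sep12`; a weakened Robson criterion).** Let `R` be a ring, `n` its prime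
radical, `R̄ = R/n` (realized by a surjective `π` with kernel `n`).  TFAE:
(1) `R` has a left Artinian left quotient ring;
(2) (a) `R̄` is a left Goldie ring, (b) `n` is a nilpotent ideal, (c) `C' ⊆ C`,
(d) for all `c ∈ C'` and `m ∈ n` there are `c₁ ∈ C'` and `m₁ ∈ n` with `c₁ m = m₁ c`, and
(e) `R` satisfies the ACC on `C'`-closed left ideals. -/
theorem left_artinian_left_quotient_ring_criterion_robson_weak
    {R : Type u} [Ring R] (Rbar : Type v) [Ring Rbar] (π : R →+* Rbar)
    (hπsurj : Function.Surjective π) (hπker : RingHom.ker π = primeRadical R) :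
    HasArtinianLeftQuot R ↔
      (IsLeftGoldie Rbar ∧
        IsNilpotentIdeal (primeRadical R) ∧
        (∀ c : R, IsRegElem (π c) → IsRegElem c) ∧
        (∀ c : R, IsRegElem (π c) → ∀ m ∈ primeRadical R,
          ∃ c₁ : R, IsRegElem (π c₁) ∧ ∃ m₁ ∈ primeRadical R, c₁ * m = m₁ * c) ∧
        (∀ f : ℕ → Ideal R,
          (∀ i, IsSClosedLeftIdeal {c : R | IsRegElem (π c)} (f i)) →
          (∀ i j, i ≤ j → f i ≤ f j) → ∃ N, ∀ k, N ≤ k → f k = f N)) := by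
  simp only [isRegElem_iff_mem_nonZeroDivisors, isNilpotentIdeal_iff_isNilpotent]
  constructor
  · rintro ⟨d, _⟩
    have h := d.quot.isLeftLocalization
    have hC' : R⁰ = Rbar⁰.comap π :=
      Submonoid.ext fun c => (h.map_mem_nonZeroDivisors_iff hπsurj hπker).symm
    rw [hC'] at h
    exact ⟨h.isLeftGoldie_of_ker_eq_primeRadical hπsurj hπker, h.isNilpotent_primeRadical,
      fun _ hc => hC'.ge hc, fun c hc m hm => h.exists_mul_eq_mul_of_mem_primeRadical hc hm,
      h.acc_isSClosed⟩
  · rintro ⟨hG, hnil, hreg, hn, hacc⟩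
    have hsp := isSemiprimeRing_of_ker_eq_primeRadical hπsurj hπker
    rw [← hπker] at hnil hn
    have hS : Rbar⁰.comap π ≤ R⁰ := hreg
    obtain ⟨_⟩ := nonempty_oreSet_comap hπsurj hS (fun _ => hG.exists_mul_eq_mul hsp)
      fun c hc m hm => by
        obtain ⟨d, hd, b, -, h⟩ := hn c hc m hm
        exact ⟨d, hd, b, h⟩
    have h := IsLeftLocalization.numeratorRingHom hS
    have := h.isNoetherianRing hacc
    have := h.isArtinianRing hπsurj hG hsp hnil
    exact ⟨⟨_, _, h.isLeftQuotRing⟩, this⟩
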